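/- arXiv:1306.4791 — 2 statements merged into one kernel-verified Lean document; each statement's English description precedes it below -/
import Mathlib

section
/- Let K be a UFD of characteristic p > 0, let d be a nonzero K-derivation of K[x,y] such that d(x) and d(y) are coprime, and let f ∈ K[x,y] \ K[x^p,y^p]. The following conditions are equivalent: (1) K[x,y]^d = K[x^p, y^p, f] (the K-subalgebra generated by x^p, y^p and f); (2) d = c·d_f for some invertible element c ∈ K; (3) d(f) = 0 and gcd(∂f/∂x, ∂f/∂y) is a unit; (4) d* = 0, f − f_{(p)} is nonzero, belongs to K[x,y]^d, has minimal total degree among all nonzero polynomials of the form h − h_{(p)} (h ∈ K[x,y]) belonging to K[x,y]^d, and f − f_{(p)} is not divisible by any non-invertible element of K \ {0}. -/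
/-!
Write `B = K[x^p,y^p]`, the ring of common constants of `∂/∂x` and `∂/∂y` (`pderivKer`), and `d_f`
for the Jacobian derivation of `f` (`jacobianDer`). Since `d x` and `d y` are coprime, `d f = 0`
means that `d_f = h d` for a polynomial `h`, and condition (3) says that moreover `h` is a unit.
The units of `K[x,y]` are those of `K`, so (3) is equivalent to (2). Taking divergences in
`d_f = h d` gives `d h + h d* = 0`, because `d_f` has divergence zero.

(3) implies (1). If `d g = 0`, then `d_g = r d_f` for a polynomial `r`, and `d_f r = 0` by the
divergence formula. As `r` has smaller degree than `g`, induction gives `r = ∑_{i<p} b_i f^i` with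
`b_i ∈ B`. The terms with `i < p - 1` integrate to elements of `B[f]`, so `b_{p-1} f^{p-1} ∇f` is a
gradient. This forces `b_{p-1} = 0` by the Cartier-type congruence `f^{p-1} E f ≡ (E f)^p` modulo
the image of an Euler derivation `E`: `(E f)^p` lies in `B`, and a constant of `E` in the image of
`E`, which is diagonal on monomials, vanishes. Hence `g ∈ B[f]`.

(1) implies (3). Suppose a prime `q` divides `h`. The differential of `f` vanishes in the fraction
field of `K[x,y]/(q)`, a purely inseparable extension of exponent one of the field generated by `B`,
so `f` lies in that field: there are `w, u ∈ B` with `q ∤ w` and `q ∣ w f - u`. If `q ∉ B`,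
differentiating shows `q² ∣ w f - u`. Either way some power `(w f - u)^k` with `k < p` is divisible
by some `π ∈ B` with `q ∣ π`. The quotient is a constant of `d`, but it is not in `B[f]`: as
`1, f, …, f^{p-1}` are independent over `B`, that would give `π ∣ w^k`.

(3) is equivalent to (4). Under (3), gradients of constants of `d` are polynomial multiples of that
of `f`, and degrees can be compared. Conversely, zero divergence makes `h` a constant of `d`; as its
degree is smaller than that of `f - f_{(p)}`, minimality gives `h ∈ B`. Then `h` divides
`f - f_{(p)}` and the quotient is again a constant of `d` outside `B`, so minimality leaves `h` of
degree zero, and primitivity makes it a unit.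
-/

open MvPolynomial

/-- `f_{(p)}`: the coefficient `a₀₀ ∈ K[x^p,y^p]` in the unique representation
`f = Σ_{0≤i,j<p} a_{ij} x^i y^j` with `a_{ij} ∈ K[x^p,y^p]`; concretely it is the
sum of the monomials of `f` in which both exponents are divisible by `p`. -/
noncomputable def pPart {K : Type*} [CommRing K] (p : ℕ)
    (f : MvPolynomial (Fin 2) K) : MvPolynomial (Fin 2) K :=
  ∑ m ∈ f.support.filter (fun m => ∀ i, p ∣ m i), monomial m (coeff m f)

section PartialDerivatives

variable {σ R : Type*} [CommRing R]

theorem pderiv_pderiv_comm (i j : σ) (f : MvPolynomial σ R) :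
    pderiv i (pderiv j f) = pderiv j (pderiv i f) := by
  classical
  have bracket_eq_zero : ⁅pderiv (R := R) i, pderiv j⁆ = 0 :=
    derivation_ext fun k => by
      rw [Derivation.commutator_apply, pderiv_X, pderiv_X, Pi.single_apply, Pi.single_apply]
      split_ifs <;> simp
  exact sub_eq_zero.1 (DFunLike.congr_fun bracket_eq_zero f)

theorem totalDegree_pderiv_lt {i : σ} {f : MvPolynomial σ R} (h : pderiv i f ≠ 0) :
    (pderiv i f).totalDegree < f.totalDegree := by
  obtain ⟨m, hm, hdeg⟩ := Finset.exists_mem_eq_sup (pderiv i f).support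
    (support_nonempty.2 h) fun s => s.sum fun _ e => e
  rw [mem_support_iff, coeff_pderiv] at hm
  have hle := le_totalDegree (mem_support_iff.2 (left_ne_zero_of_mul hm))
  rw [Finsupp.sum_add_index' (fun _ => rfl) (fun _ _ _ => rfl),
    Finsupp.sum_single_index rfl] at hle
  rw [totalDegree, hdeg]
  exact hle

theorem exists_totalDegree_le_totalDegree_pderiv_add_one [NoZeroDivisors R]
    {f : MvPolynomial σ R} (hf : f ≠ 0) (hsupp : ∀ m ∈ f.support, ∃ i, (m i : R) ≠ 0) :
    ∃ i, pderiv i f ≠ 0 ∧ f.totalDegree ≤ (pderiv i f).totalDegree + 1 := by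
  obtain ⟨m, hm, hdeg⟩ := Finset.exists_mem_eq_sup f.support (support_nonempty.2 hf)
    fun s => s.sum fun _ e => e
  obtain ⟨i, hi⟩ := hsupp m hm
  obtain ⟨n, rfl⟩ : ∃ n, m = n + Finsupp.single i 1 :=
    ⟨m - Finsupp.single i 1, (tsub_add_cancel_of_le (by
      simpa [Nat.one_le_iff_ne_zero] using fun h0 => hi (by simp [h0]))).symm⟩
  have hn : n ∈ (pderiv i f).support := by
    rw [mem_support_iff, coeff_pderiv]
    exact mul_ne_zero (mem_support_iff.1 hm) (by simpa using hi)
  refine ⟨i, support_nonempty.1 ⟨n, hn⟩, ?_⟩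
  calc f.totalDegree = (n.sum fun _ e => e) + 1 := by
        rw [totalDegree, hdeg, Finsupp.sum_add_index' (fun _ => rfl) (fun _ _ _ => rfl),
          Finsupp.sum_single_index rfl]
    _ ≤ (pderiv i f).totalDegree + 1 := by gcongr; exact le_totalDegree hn

theorem totalDegree_lt_of_dvd_pderiv [NoZeroDivisors R] {i : σ} {f h : MvPolynomial σ R}
    (hdvd : h ∣ pderiv i f) (hne : pderiv i f ≠ 0) : h.totalDegree < f.totalDegree :=
  (totalDegree_le_of_dvd_of_isDomain hdvd hne).trans_lt (totalDegree_pderiv_lt hne)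

theorem derivation_aeval [Fintype σ] {A M : Type*} [CommRing A] [Algebra R A] [AddCommGroup M]
    [Module R M] [Module A M] (D : Derivation R A M) (v : σ → A) (f : MvPolynomial σ R) :
    D (aeval v f) = ∑ i, aeval v (pderiv i f) • D (v i) := by
  classical
  induction f using MvPolynomial.induction_on with
  | C a => simp
  | add f g hf hg => simp [hf, hg, add_smul, Finset.sum_add_distrib]
  | mul_X f i hf =>
    simp [hf, pderiv_X, Pi.single_apply, add_smul, Finset.sum_add_distrib, Finset.smul_sum,
      mul_smul, apply_ite (aeval v), ite_smul]

theorem derivation_eq_sum [Fintype σ] {M : Type*} [AddCommGroup M] [Module R M]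
    [Module (MvPolynomial σ R) M] (D : Derivation R (MvPolynomial σ R) M) (f : MvPolynomial σ R) :
    D f = ∑ i, pderiv i f • D (X i) := by
  simpa using derivation_aeval D X f

end PartialDerivatives

/-- The Euler derivation `Xᵢ ∂/∂Xᵢ`, which unlike `∂/∂Xᵢ` is diagonal on monomials. -/
noncomputable def eulerDer {σ R : Type*} [CommRing R] (i : σ) :
    Derivation R (MvPolynomial σ R) (MvPolynomial σ R) :=
  (X i : MvPolynomial σ R) • pderiv i

section EulerDer

variable {σ R : Type*} [CommRing R]

theorem eulerDer_apply (i : σ) (f : MvPolynomial σ R) : eulerDer i f = X i * pderiv i f :=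
  rfl

theorem eulerDer_monomial (i : σ) (m : σ →₀ ℕ) (a : R) :
    eulerDer i (monomial m a) = m i • monomial m a :=
  X_mul_pderiv_monomial

theorem coeff_eulerDer (i : σ) (f : MvPolynomial σ R) (m : σ →₀ ℕ) :
    coeff m (eulerDer i f) = m i * coeff m f := by
  classical
  induction f using MvPolynomial.induction_on' with
  | monomial s a =>
    rw [eulerDer_monomial, coeff_smul, coeff_monomial]
    split_ifs with h <;> simp [h]
  | add f g hf hg => rw [map_add, coeff_add, hf, hg, coeff_add, mul_add]

theorem coeff_iterate_eulerDer (i : σ) (k : ℕ) (f : MvPolynomial σ R) (m : σ →₀ ℕ) :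
    coeff m ((eulerDer i)^[k] f) = (m i : R) ^ k * coeff m f := by
  induction k with
  | zero => simp
  | succ k ih => rw [Function.iterate_succ_apply', coeff_eulerDer, ih, pow_succ', mul_assoc]

theorem eulerDer_eq_zero_iff [NoZeroDivisors R] {i : σ} {f : MvPolynomial σ R} :
    eulerDer i f = 0 ↔ pderiv i f = 0 := by
  nontriviality R
  simp [eulerDer_apply, X_ne_zero]

theorem eulerDer_eulerDer_eq_zero_iff [NoZeroDivisors R] {i : σ} {f : MvPolynomial σ R} :
    eulerDer i (eulerDer i f) = 0 ↔ eulerDer i f = 0 := by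
  simp [MvPolynomial.ext_iff, coeff_eulerDer]

theorem dvd_iterate_eulerDer {i : σ} {f h : MvPolynomial σ R} (hh : pderiv i h = 0)
    (hdvd : h ∣ f) (k : ℕ) : h ∣ (eulerDer i)^[k] f := by
  induction k with
  | zero => exact hdvd
  | succ k ih =>
    obtain ⟨g, hg⟩ := ih
    rw [Function.iterate_succ_apply', hg, eulerDer_apply, pderiv_mul, hh, zero_mul, zero_add]
    exact (dvd_mul_right _ _).mul_left _

end EulerDer

/-- The ring of constants of all partial derivatives. Over a domain of characteristic `p` it is
`R[Xᵢ^p : i]`, see `pderivKer_eq_adjoin`. -/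
def pderivKer (σ R : Type*) [CommRing R] : Subalgebra R (MvPolynomial σ R) where
  carrier := {g | ∀ i, pderiv i g = 0}
  mul_mem' ha hb i := by simp [ha i, hb i]
  add_mem' ha hb i := by simp [ha i, hb i]
  algebraMap_mem' r i := by simp [algebraMap_eq]

section PderivKer

variable {σ R : Type*} [CommRing R]

theorem mem_pderivKer {g : MvPolynomial σ R} : g ∈ pderivKer σ R ↔ ∀ i, pderiv i g = 0 :=
  Iff.rfl

theorem exists_pderiv_ne_zero {g : MvPolynomial σ R} (hg : g ∉ pderivKer σ R) :
    ∃ i, pderiv i g ≠ 0 := by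
  simpa [mem_pderivKer] using hg

theorem pow_mem_pderivKer (p : ℕ) [CharP R p] (g : MvPolynomial σ R) : g ^ p ∈ pderivKer σ R :=
  fun i => by simp [Derivation.leibniz_pow]

theorem derivation_eq_zero_of_mem_pderivKer [Finite σ] {M : Type*} [AddCommGroup M] [Module R M]
    [Module (MvPolynomial σ R) M] (D : Derivation R (MvPolynomial σ R) M) {b : MvPolynomial σ R}
    (hb : b ∈ pderivKer σ R) : D b = 0 := by
  cases nonempty_fintype σ
  simp [derivation_eq_sum D b, mem_pderivKer.1 hb]

theorem mem_pderivKer_iff_support [NoZeroDivisors R] (p : ℕ) [CharP R p] {g : MvPolynomial σ R} :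
    g ∈ pderivKer σ R ↔ ∀ m ∈ g.support, ∀ i, p ∣ m i := by
  simp only [mem_pderivKer, ← eulerDer_eq_zero_iff]
  simp only [MvPolynomial.ext_iff, coeff_eulerDer, coeff_zero, mul_eq_zero,
    CharP.cast_eq_zero_iff R p, mem_support_iff]
  exact ⟨fun h m hm i => (h i m).resolve_right hm,
    fun h i m => or_iff_not_imp_right.2 fun hm => h m hm i⟩

theorem pderivKer_eq_adjoin [NoZeroDivisors R] (p : ℕ) [CharP R p] :
    pderivKer σ R = Algebra.adjoin R (Set.range fun i => X i ^ p) := by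
  refine le_antisymm (fun g hg => ?_) (Algebra.adjoin_le ?_)
  · rw [g.as_sum]
    refine Subalgebra.sum_mem _ fun m hm => ?_
    rw [monomial_eq, Finsupp.prod]
    refine Subalgebra.mul_mem _ (Subalgebra.algebraMap_mem _ _)
      (Subalgebra.prod_mem _ fun i _ => ?_)
    obtain ⟨k, hk⟩ := (mem_pderivKer_iff_support p).1 hg m hm i
    rw [hk, pow_mul]
    exact Subalgebra.pow_mem _ (Algebra.subset_adjoin (Set.mem_range_self i)) _
  · rintro _ ⟨i, rfl⟩
    exact pow_mem_pderivKer p (X i)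

theorem mem_adjoin_pderivKer_singleton_iff [NoZeroDivisors R] (p : ℕ) [CharP R p]
    {f g : MvPolynomial σ R} :
    g ∈ Algebra.adjoin (pderivKer σ R) {f} ↔
      g ∈ Algebra.adjoin R ((Set.range fun i => X i ^ p) ∪ {f}) := by
  rw [Algebra.adjoin_union_eq_adjoin_adjoin, pderivKer_eq_adjoin p, Subalgebra.mem_restrictScalars]

theorem range_X_pow_fin_two (R : Type*) [CommRing R] (p : ℕ) :
    (Set.range fun i : Fin 2 => (X i : MvPolynomial (Fin 2) R) ^ p) = {X 0 ^ p, X 1 ^ p} := by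
  ext
  simp [Fin.exists_fin_two, eq_comm]

end PderivKer

theorem natCast_pow_sub_one_eq_ite (R : Type*) [Ring R] (p : ℕ) [hp : Fact p.Prime] [CharP R p]
    (n : ℕ) : (n : R) ^ (p - 1) = if p ∣ n then 0 else 1 := by
  split_ifs with hn
  · rw [(CharP.cast_eq_zero_iff R p n).2 hn, zero_pow (Nat.sub_ne_zero_of_lt hp.out.one_lt)]
  · have fermat : (n : ZMod p) ^ (p - 1) = 1 :=
      ZMod.pow_card_sub_one_eq_one (by rwa [Ne, ZMod.natCast_eq_zero_iff])
    simpa using congrArg (ZMod.castHom dvd_rfl R) fermat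

section PPart

variable {K : Type*} [CommRing K] (p : ℕ)

theorem coeff_pPart (f : MvPolynomial (Fin 2) K) (m : Fin 2 →₀ ℕ) :
    coeff m (pPart p f) = if ∀ i, p ∣ m i then coeff m f else 0 := by
  classical
  simp only [pPart, coeff_sum, coeff_monomial, Finset.sum_ite_eq', Finset.mem_filter,
    mem_support_iff]
  by_cases h : coeff m f = 0 <;> simp [h]

theorem mem_support_sub_pPart {f : MvPolynomial (Fin 2) K} {m : Fin 2 →₀ ℕ} :
    m ∈ (f - pPart p f).support ↔ m ∈ f.support ∧ ∃ i, ¬p ∣ m i := by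
  rw [mem_support_iff, mem_support_iff, coeff_sub, coeff_pPart, ← not_forall]
  split_ifs with h <;> simp [h]

theorem totalDegree_sub_pPart_le (f : MvPolynomial (Fin 2) K) :
    (f - pPart p f).totalDegree ≤ f.totalDegree :=
  totalDegree_le_of_support_subset fun _ hm => ((mem_support_sub_pPart p).1 hm).1

theorem exists_natCast_ne_zero_of_mem_support_sub_pPart [CharP K p] {f : MvPolynomial (Fin 2) K}
    {m : Fin 2 →₀ ℕ} (hm : m ∈ (f - pPart p f).support) : ∃ i, (m i : K) ≠ 0 := by
  simpa [CharP.cast_eq_zero_iff K p] using ((mem_support_sub_pPart p).1 hm).2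

theorem sub_pPart_eq [Fact p.Prime] [CharP K p] (f : MvPolynomial (Fin 2) K) :
    f - pPart p f = (eulerDer 0)^[p - 1] f + (eulerDer 1)^[p - 1] f
      - (eulerDer 0)^[p - 1] ((eulerDer 1)^[p - 1] f) := by
  ext m
  simp only [coeff_sub, coeff_add, coeff_iterate_eulerDer, coeff_pPart,
    natCast_pow_sub_one_eq_ite K p, Fin.forall_fin_two]
  split_ifs <;> simp_all

theorem dvd_sub_pPart [hp : Fact p.Prime] [CharP K p] {f h : MvPolynomial (Fin 2) K}
    (hh : h ∈ pderivKer (Fin 2) K) (hdvd : ∀ i, h ∣ pderiv i f) : h ∣ f - pPart p f := by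
  have dvd_iterate (i : Fin 2) : h ∣ (eulerDer i)^[p - 1] f := by
    obtain ⟨k, hk⟩ := Nat.exists_eq_succ_of_ne_zero (Nat.sub_ne_zero_of_lt hp.out.one_lt)
    rw [hk, Function.iterate_succ_apply]
    exact dvd_iterate_eulerDer (hh i) ((hdvd i).mul_left _) k
  rw [sub_pPart_eq]
  exact dvd_sub (dvd_add (dvd_iterate 0) (dvd_iterate 1))
    (dvd_iterate_eulerDer (hh 0) (dvd_iterate 1) _)

variable [NoZeroDivisors K] [CharP K p]

theorem pPart_mem_pderivKer (f : MvPolynomial (Fin 2) K) : pPart p f ∈ pderivKer (Fin 2) K := by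
  rw [mem_pderivKer_iff_support p]
  intro m hm
  rw [mem_support_iff, coeff_pPart] at hm
  exact (ite_ne_right_iff.1 hm).1

theorem sub_pPart_ne_zero_iff {f : MvPolynomial (Fin 2) K} :
    f - pPart p f ≠ 0 ↔ f ∉ pderivKer (Fin 2) K := by
  rw [← support_nonempty, mem_pderivKer_iff_support p]
  push Not
  simp only [Finset.Nonempty, mem_support_sub_pPart p]

theorem derivation_sub_pPart {M : Type*} [AddCommGroup M] [Module K M]
    [Module (MvPolynomial (Fin 2) K) M] (D : Derivation K (MvPolynomial (Fin 2) K) M)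
    (f : MvPolynomial (Fin 2) K) : D (f - pPart p f) = D f := by
  rw [map_sub, derivation_eq_zero_of_mem_pderivKer D (pPart_mem_pderivKer p f), sub_zero]

theorem sub_pPart_mem_pderivKer_iff {f : MvPolynomial (Fin 2) K} :
    f - pPart p f ∈ pderivKer (Fin 2) K ↔ f ∈ pderivKer (Fin 2) K := by
  simp only [mem_pderivKer, derivation_sub_pPart]

theorem exists_totalDegree_sub_pPart_le {f : MvPolynomial (Fin 2) K}
    (hf : f ∉ pderivKer (Fin 2) K) :
    ∃ i, pderiv i f ≠ 0 ∧ (f - pPart p f).totalDegree ≤ (pderiv i f).totalDegree + 1 := by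
  simpa only [derivation_sub_pPart] using exists_totalDegree_le_totalDegree_pderiv_add_one
    ((sub_pPart_ne_zero_iff p).2 hf) fun m => exists_natCast_ne_zero_of_mem_support_sub_pPart p

end PPart

section PolynomialsOverConstants

open Polynomial (natDegree derivative)

theorem exists_derivative_eq {R : Type*} [CommRing R] {p : ℕ} [hp : Fact p.Prime] [CharP R p]
    {P : Polynomial R} (hP : ∀ i, p ∣ i + 1 → P.coeff i = 0) : ∃ Q, derivative Q = P := by
  refine ⟨∑ i ∈ Finset.range (P.natDegree + 1),
    Polynomial.monomial (i + 1) (P.coeff i * Ring.inverse ((i + 1 : ℕ) : R)), ?_⟩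
  rw [Polynomial.derivative_sum]
  conv_rhs => rw [P.as_sum_range]
  refine Finset.sum_congr rfl fun i _ => ?_
  rw [Polynomial.derivative_monomial, Nat.add_sub_cancel]
  by_cases hi : p ∣ i + 1
  · simp [hP i hi]
  · rw [Ring.inverse_mul_cancel_right _ _ ((CharP.isUnit_natCast_iff hp.out).2 hi)]

theorem exists_derivative_eq_erase {R : Type*} [CommRing R] {p : ℕ} [Fact p.Prime] [CharP R p]
    {P : Polynomial R} (hdeg : P.natDegree < p) :
    ∃ Q, derivative Q = P.erase (p - 1) := by
  refine exists_derivative_eq (p := p) fun i hi => ?_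
  rw [Polynomial.coeff_erase]
  split_ifs with hip
  · rfl
  · have hle := Nat.le_of_dvd i.succ_pos hi
    exact Polynomial.coeff_eq_zero_of_natDegree_lt (by omega)

variable {B A : Type*} [CommRing B] [CommRing A] [Algebra B A]

theorem exists_natDegree_lt_aeval_eq [Nontrivial B] {f g : A} {n : ℕ} (hn : n ≠ 0) {b : B}
    (hb : f ^ n = algebraMap B A b) (hg : g ∈ Algebra.adjoin B {f}) :
    ∃ P : Polynomial B, P.natDegree < n ∧ Polynomial.aeval f P = g := by
  rw [Algebra.adjoin_singleton_eq_range_aeval] at hg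
  obtain ⟨P, rfl⟩ := hg
  have hroot : Polynomial.aeval f (Polynomial.X ^ n - Polynomial.C b) = 0 := by simp [hb]
  refine ⟨P %ₘ (Polynomial.X ^ n - Polynomial.C b), ?_,
    Polynomial.aeval_modByMonic_eq_self_of_root hroot⟩
  refine (Polynomial.natDegree_modByMonic_lt P (Polynomial.monic_X_pow_sub_C b hn) ?_).trans_eq
    Polynomial.natDegree_X_pow_sub_C
  intro h
  simpa [hn] using congrArg natDegree h

variable [NoZeroDivisors A] [FaithfulSMul B A] (p : ℕ) [CharP A p] (D : Derivation B A A) {f : A}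

theorem eq_zero_of_aeval_eq_zero (hf : D f ≠ 0) {P : Polynomial B} (hdeg : P.natDegree < p)
    (hP : Polynomial.aeval f P = 0) : P = 0 := by
  induction hn : P.natDegree using Nat.strong_induction_on generalizing P with
  | _ n ih =>
    by_cases h0 : P.natDegree = 0
    · rw [Polynomial.eq_C_of_natDegree_eq_zero h0] at hP ⊢
      simpa using hP
    have hlt : (derivative P).natDegree < P.natDegree := Polynomial.natDegree_derivative_lt h0
    have hder : derivative P = 0 := by
      refine ih _ (hn ▸ hlt) (hlt.trans hdeg) ?_ rfl
      have chain := D.map_aeval P f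
      rw [hP, map_zero, smul_eq_mul] at chain
      exact (mul_eq_zero.1 chain.symm).resolve_right hf
    have hlead : algebraMap B A P.leadingCoeff * (P.natDegree : A) = 0 := by
      have := congrArg (algebraMap B A) (congrArg (Polynomial.coeff · (P.natDegree - 1)) hder)
      simpa [Polynomial.coeff_derivative, Nat.sub_add_cancel (Nat.one_le_iff_ne_zero.2 h0),
        ← Nat.cast_succ] using this
    have hp : p ∣ P.natDegree := by
      rw [← CharP.cast_eq_zero_iff A p]
      refine (mul_eq_zero.1 hlead).resolve_left fun hc => h0 ?_
      rw [FaithfulSMul.algebraMap_eq_zero_iff, Polynomial.leadingCoeff_eq_zero] at hc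
      rw [hc, Polynomial.natDegree_zero]
    exact absurd (Nat.eq_zero_of_dvd_of_lt hp hdeg) h0

theorem dvd_pow_of_mul_aeval_eq (hf : D f ≠ 0) {k : ℕ} (hk : k < p) {w u π : B}
    {P : Polynomial B} (hdeg : P.natDegree < p)
    (hP : algebraMap B A π * Polynomial.aeval f P = (algebraMap B A w * f - algebraMap B A u) ^ k) :
    π ∣ w ^ k := by
  have hlin : (Polynomial.C w * Polynomial.X - Polynomial.C u).natDegree ≤ 1 := by
    compute_degree
  have hzero : Polynomial.C π * P - (Polynomial.C w * Polynomial.X - Polynomial.C u) ^ k = 0 := by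
    refine eq_zero_of_aeval_eq_zero p D hf ?_ (by simp [hP])
    refine (Polynomial.natDegree_sub_le _ _).trans_lt (max_lt ?_ ?_)
    · exact (Polynomial.natDegree_C_mul_le _ _).trans_lt hdeg
    · exact (Polynomial.natDegree_pow_le_of_le k hlin).trans_lt (by rwa [mul_one])
  have hcoeff := Polynomial.coeff_pow_of_natDegree_le (m := k) hlin
  rw [mul_one, ← sub_eq_zero.1 hzero, Polynomial.coeff_C_mul] at hcoeff
  exact ⟨P.coeff k, by simpa using hcoeff.symm⟩

end PolynomialsOverConstants

section PderivKerLinear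

variable {σ R : Type*} [CommRing R]

/-- A derivation of `R[Xᵢ : i]`, for finitely many variables, regarded as linear over
`pderivKer σ R`: this is what lets it act on polynomials in one element over that ring. -/
noncomputable def pderivKerLinear [Finite σ]
    (D : Derivation R (MvPolynomial σ R) (MvPolynomial σ R)) :
    Derivation (pderivKer σ R) (MvPolynomial σ R) (MvPolynomial σ R) :=
  Derivation.mk'
    { D with
      map_smul' := fun b g => by
        simp [Algebra.smul_def, derivation_eq_zero_of_mem_pderivKer D b.2] }
    D.leibniz

@[simp]
theorem pderivKerLinear_apply [Finite σ] (D : Derivation R (MvPolynomial σ R) (MvPolynomial σ R))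
    (g : MvPolynomial σ R) : pderivKerLinear D g = D g :=
  rfl

instance (p : ℕ) [CharP R p] : CharP (pderivKer σ R) p :=
  charP_of_injective_algebraMap (R := R)
    (fun _ _ h => C_injective σ R (congrArg Subtype.val h)) p

end PderivKerLinear

section Cartier

theorem exists_add_pow_mul_derivation {R A : Type*} [CommRing R] [CommRing A] [Algebra R A]
    (p : ℕ) [hp : Fact p.Prime] (D : Derivation R A A) (u v : A) :
    ∃ r, (u + v) ^ (p - 1) * D (u + v) = u ^ (p - 1) * D u + v ^ (p - 1) * D v + D r := by
  obtain ⟨r, hr⟩ := exists_add_pow_prime_eq hp.out (X 0 : MvPolynomial (Fin 2) ℤ) (X 1)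
  have partial_eq (i : Fin 2) : (X 0 + X 1 : MvPolynomial (Fin 2) ℤ) ^ (p - 1)
      = X i ^ (p - 1) + pderiv i (X 0 * X 1 * r) := by
    have h := congrArg (pderiv i) hr
    rw [mul_assoc (p : MvPolynomial (Fin 2) ℤ), mul_assoc] at h
    have hp0 : (p : MvPolynomial (Fin 2) ℤ) ≠ 0 := Nat.cast_ne_zero.2 hp.out.ne_zero
    refine mul_left_cancel₀ hp0 ?_
    fin_cases i <;>
      simpa [Derivation.leibniz_pow, mul_add, mul_assoc, mul_left_comm, mul_comm] using h
  have h0 := congrArg (aeval ![u, v]) (partial_eq 0)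
  have h1 := congrArg (aeval ![u, v]) (partial_eq 1)
  refine ⟨aeval ![u, v] (X 0 * X 1 * r), ?_⟩
  have chain := derivation_aeval (D.restrictScalars ℤ) ![u, v] (X 0 * X 1 * r)
  simp only [Fin.sum_univ_two, Derivation.restrictScalars_apply, map_pow, map_add, aeval_X,
    Matrix.cons_val_zero, Matrix.cons_val_one, smul_eq_mul] at chain h0 h1
  rw [chain, map_add]
  linear_combination D u * h0 + D v * h1

variable {σ R : Type*} [CommRing R] (p : ℕ) [hp : Fact p.Prime] [CharP R p]

theorem exists_pow_mul_eulerDer (i : σ) (f : MvPolynomial σ R) :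
    ∃ r, f ^ (p - 1) * eulerDer i f = eulerDer i f ^ p + eulerDer i r := by
  induction f using MvPolynomial.induction_on' with
  | monomial s a =>
    have fermat : (s i : MvPolynomial σ R) ^ p = s i := by
      rw [← map_natCast (ZMod.castHom dvd_rfl (MvPolynomial σ R)), ← map_pow, ZMod.pow_card]
    refine ⟨0, ?_⟩
    rw [eulerDer_monomial, map_zero, add_zero, nsmul_eq_mul, mul_pow, fermat, mul_left_comm,
      ← pow_succ, Nat.sub_add_cancel hp.out.one_le]
  | add f g hf hg =>
    obtain ⟨r, hr⟩ := hf
    obtain ⟨s, hs⟩ := hg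
    obtain ⟨t, ht⟩ := exists_add_pow_mul_derivation p (eulerDer i) f g
    refine ⟨r + s + t, ?_⟩
    rw [ht, hr, hs, map_add, map_add, map_add, add_pow_char]
    ring

theorem eq_zero_of_pderiv_eq_mul_pow_mul_pderiv [NoZeroDivisors R] {i : σ}
    {b f g : MvPolynomial σ R} (hb : pderiv i b = 0) (hf : pderiv i f ≠ 0)
    (hg : pderiv i g = b * f ^ (p - 1) * pderiv i f) : b = 0 := by
  obtain ⟨r, hr⟩ := exists_pow_mul_eulerDer p i f
  have euler_eq : eulerDer i (g - b * r) = b * eulerDer i f ^ p := by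
    simp only [eulerDer_apply, map_sub, pderiv_mul, hb, hg] at hr ⊢
    linear_combination b * hr
  have euler_eq_zero : eulerDer i (g - b * r) = 0 := by
    rw [← eulerDer_eulerDer_eq_zero_iff, euler_eq, eulerDer_eq_zero_iff, pderiv_mul, hb,
      pow_mem_pderivKer p _ i, zero_mul, mul_zero, add_zero]
  rw [euler_eq] at euler_eq_zero
  exact (mul_eq_zero.1 euler_eq_zero).resolve_right
    (pow_ne_zero _ (eulerDer_eq_zero_iff.not.2 hf))

end Cartier

section PurelyInseparable

open IntermediateField

variable {F E : Type*} [Field F] [Field E] [Algebra F E]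

theorem exists_maximal_notMem_intermediateField {t : E} (ht : t ∉ (algebraMap F E).range) :
    ∃ M : IntermediateField F E, Maximal (t ∉ ·) M := by
  suffices chain_bound : ∀ c ⊆ {M : IntermediateField F E | t ∉ M}, IsChain (· ≤ ·) c →
      ∀ N ∈ c, ∃ ub ∈ {M : IntermediateField F E | t ∉ M}, ∀ M ∈ c, M ≤ ub by
    obtain ⟨M, -, hM⟩ := zorn_le_nonempty₀ _ chain_bound ⊥ (by simpa [mem_bot] using ht)
    exact ⟨M, hM⟩
  refine fun c hc hchain N hN => ⟨sSup c, fun hmem => ?_, fun _ => le_sSup⟩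
  have : Nonempty c := ⟨⟨N, hN⟩⟩
  rw [sSup_eq_iSup', ← SetLike.mem_coe, coe_iSup_of_directed hchain.directed,
    Set.mem_iUnion] at hmem
  obtain ⟨L, hL⟩ := hmem
  exact hc L.2 hL

variable (p : ℕ) [hp : Fact p.Prime]

theorem isIntegral_of_pow_mem_range {s : E} (hs : s ^ p ∈ (algebraMap F E).range) :
    IsIntegral F s :=
  let ⟨_, ha⟩ := hs
  .of_pow hp.out.pos (ha ▸ isIntegral_algebraMap)

variable [CharP E p]

theorem finrank_adjoin_simple_eq {s : E} (hpow : s ^ p ∈ (algebraMap F E).range)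
    (hs : s ∉ (algebraMap F E).range) : Module.finrank F F⟮s⟯ = p := by
  obtain ⟨a, ha⟩ := hpow
  have hirr : Irreducible (Polynomial.X ^ p - Polynomial.C a : Polynomial F) :=
    X_pow_sub_C_irreducible_of_prime hp.out fun b hb =>
      hs ⟨b, frobenius_inj E p (by simp [frobenius_def, ← map_pow, hb, ha])⟩
  rw [adjoin.finrank (isIntegral_of_pow_mem_range p ⟨a, ha⟩),
    ← minpoly.eq_of_irreducible_of_monic hirr (by simp [ha])
      (Polynomial.monic_X_pow_sub_C a hp.out.ne_zero), Polynomial.natDegree_X_pow_sub_C]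

theorem adjoin_simple_eq_top_of_maximal (hpow : ∀ s : E, s ^ p ∈ (algebraMap F E).range) {t : E}
    (ht : t ∉ (algebraMap F E).range) (hmax : ∀ M : IntermediateField F E, t ∉ M → M = ⊥) :
    F⟮t⟯ = ⊤ := by
  refine eq_top_iff.2 fun s _ => ?_
  by_cases hs : s ∈ (algebraMap F E).range
  · obtain ⟨a, rfl⟩ := hs
    exact F⟮t⟯.algebraMap_mem a
  have hle : F⟮t⟯ ≤ F⟮s⟯ := adjoin_simple_le_iff.2 <| by
    by_contra h
    exact hs (mem_bot.1 (hmax _ h ▸ mem_adjoin_simple_self F s))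
  have := adjoin.finiteDimensional (isIntegral_of_pow_mem_range p (hpow s))
  rw [eq_of_le_of_finrank_eq hle
    (by rw [finrank_adjoin_simple_eq p (hpow t) ht, finrank_adjoin_simple_eq p (hpow s) hs])]
  exact mem_adjoin_simple_self F s

theorem mem_range_of_adjoin_simple_eq_top (hpow : ∀ s : E, s ^ p ∈ (algebraMap F E).range) {t : E}
    (htop : F⟮t⟯ = ⊤) (hD : KaehlerDifferential.D F E t = 0) : t ∈ (algebraMap F E).range := by
  have hint := isIntegral_of_pow_mem_range p (hpow t)
  have hadjoin : Algebra.adjoin F {t} = ⊤ := by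
    rw [← adjoin_simple_toSubalgebra_of_isAlgebraic hint.isAlgebraic, htop, top_toSubalgebra]
  have : KaehlerDifferential.D F E = 0 :=
    Derivation.ext_of_adjoin_eq_top _ hadjoin (by simpa using hD)
  have : Algebra.FormallyUnramified F E := by
    refine ⟨?_⟩
    rw [← Submodule.subsingleton_iff E, ← subsingleton_iff_bot_eq_top,
      ← KaehlerDifferential.span_range_derivation, this]
    simp
  have : FiniteDimensional F E := by
    have := adjoin.finiteDimensional hint
    rw [htop] at this
    exact topEquiv.toLinearEquiv.finiteDimensional
  have : CharP F p := (algebraMap F E).charP (algebraMap F E).injective p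
  have : IsPurelyInseparable F E :=
    (isPurelyInseparable_iff_pow_mem F p).2 fun s => ⟨1, by simpa using hpow s⟩
  simp [Algebra.FormallyUnramified.range_eq_top_of_isPurelyInseparable F E]

theorem mem_range_of_kaehlerDifferential_eq_zero
    (hpow : ∀ s : E, s ^ p ∈ (algebraMap F E).range) {t : E}
    (hD : KaehlerDifferential.D F E t = 0) : t ∈ (algebraMap F E).range := by
  by_contra ht
  -- Over an intermediate field maximal among those avoiding `t`, the element `t` generates `E`, so
  -- the vanishing of its differential makes the extension unramified, hence trivial.
  obtain ⟨M, hM⟩ := exists_maximal_notMem_intermediateField ht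
  have range_eq (s : E) : s ∈ (algebraMap M E).range ↔ s ∈ M := by simp
  have hpowM (s : E) : s ^ p ∈ (algebraMap M E).range := by
    obtain ⟨a, ha⟩ := hpow s
    exact ⟨algebraMap F M a, by rw [← ha, ← IsScalarTower.algebraMap_apply]⟩
  have htop : M⟮t⟯ = ⊤ := by
    refine adjoin_simple_eq_top_of_maximal p hpowM ((range_eq t).not.2 hM.prop) fun N hN => ?_
    refine le_bot_iff.1 fun s hs => ?_
    rw [mem_bot]
    have hle : M ≤ N.restrictScalars F := fun a ha => N.algebraMap_mem ⟨a, ha⟩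
    exact (range_eq s).2 (hM.le_of_ge (y := N.restrictScalars F) hN hle hs)
  refine hM.prop ((range_eq t).1 (mem_range_of_adjoin_simple_eq_top p hpowM htop ?_))
  simpa [hD] using (KaehlerDifferential.map_D F M E E t).symm

end PurelyInseparable

section Residue

theorem algebraMap_fractionRing_quotient_eq_zero_iff {A : Type*} [CommRing A] {P : Ideal A}
    [P.IsPrime] {a : A} : algebraMap A (FractionRing (A ⧸ P)) a = 0 ↔ a ∈ P := by
  rw [IsScalarTower.algebraMap_apply A (A ⧸ P), FaithfulSMul.algebraMap_eq_zero_iff,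
    Ideal.Quotient.algebraMap_eq, Ideal.Quotient.eq_zero_iff_mem]

theorem exists_div_eq_of_fractionRing_quotient {A : Type*} [CommRing A] {P : Ideal A} [P.IsPrime]
    (s : FractionRing (A ⧸ P)) : ∃ a, ∃ c ∉ P, algebraMap A _ a / algebraMap A _ c = s := by
  obtain ⟨a, c, hc, rfl⟩ := IsFractionRing.div_surjective (A := A ⧸ P) s
  obtain ⟨a, rfl⟩ := Ideal.Quotient.mk_surjective a
  obtain ⟨c, rfl⟩ := Ideal.Quotient.mk_surjective c
  exact ⟨a, c, fun h => nonZeroDivisors.ne_zero hc (Ideal.Quotient.eq_zero_iff_mem.2 h), rfl⟩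

theorem exists_mul_sub_mem_of_kaehlerDifferential_mem {B A : Type*} [CommRing B] [CommRing A]
    [Algebra B A] (p : ℕ) [hp : Fact p.Prime] [CharP A p]
    (hpow : ∀ a : A, a ^ p ∈ (algebraMap B A).range) (P : Ideal A) [P.IsPrime] {f : A}
    (hf : KaehlerDifferential.D B A f ∈ P • (⊤ : Submodule A (Ω[A⁄B]))) :
    ∃ w u : B, algebraMap B A w ∉ P ∧ algebraMap B A w * f - algebraMap B A u ∈ P := by
  let E := FractionRing (A ⧸ P)
  let F := FractionRing (B ⧸ P.under B)
  have : FaithfulSMul (B ⧸ P.under B) E := .trans (B ⧸ P.under B) (A ⧸ P) E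
  let := FractionRing.liftAlgebra (B ⧸ P.under B) E
  have square (b : B) : algebraMap F E (algebraMap B F b) = algebraMap A E (algebraMap B A b) := by
    rw [← IsScalarTower.algebraMap_apply, ← IsScalarTower.algebraMap_apply]
  have : CharP E p := by
    rw [CharP.charP_iff_prime_eq_zero hp.out, ← map_natCast (algebraMap A E), CharP.cast_eq_zero,
      map_zero]
  have pow_mem (s : E) : s ^ p ∈ (algebraMap F E).range := by
    obtain ⟨a, c, -, rfl⟩ := exists_div_eq_of_fractionRing_quotient s
    obtain ⟨b, hb⟩ := hpow a
    obtain ⟨e, he⟩ := hpow c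
    refine ⟨algebraMap B F b / algebraMap B F e, ?_⟩
    rw [map_div₀, square, square, hb, he, map_pow, map_pow, div_pow]
  have hD : KaehlerDifferential.D F E (algebraMap A E f) = 0 := by
    rw [← KaehlerDifferential.map_D B F A E]
    refine Submodule.smul_induction_on hf (fun a ha ω _ => ?_) fun x y hx hy => ?_
    · rw [map_smul, ← algebraMap_smul E, algebraMap_fractionRing_quotient_eq_zero_iff.2 ha,
        zero_smul]
    · rw [map_add, hx, hy, add_zero]
  obtain ⟨t, ht⟩ := mem_range_of_kaehlerDifferential_eq_zero p pow_mem hD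
  obtain ⟨u, w, hw, rfl⟩ := exists_div_eq_of_fractionRing_quotient t
  have hwE : algebraMap A E (algebraMap B A w) ≠ 0 :=
    algebraMap_fractionRing_quotient_eq_zero_iff.not.2 hw
  refine ⟨w, u, hw, ?_⟩
  rw [map_div₀, square, square, div_eq_iff hwE] at ht
  rw [← algebraMap_fractionRing_quotient_eq_zero_iff, map_sub, map_mul, ht, mul_comm, sub_self]

theorem exists_mul_sub_mem_of_pderiv_mem {σ R : Type*} [Finite σ] [CommRing R] (p : ℕ)
    [hp : Fact p.Prime] [CharP R p] (P : Ideal (MvPolynomial σ R)) [P.IsPrime]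
    {f : MvPolynomial σ R} (hf : ∀ i, pderiv i f ∈ P) :
    ∃ w u : pderivKer σ R, (w : MvPolynomial σ R) ∉ P ∧ w * f - u ∈ P := by
  cases nonempty_fintype σ
  let D := KaehlerDifferential.D (pderivKer σ R) (MvPolynomial σ R)
  have gradient : D f = ∑ i, pderiv i f • D (X i) := derivation_eq_sum (D.restrictScalars R) f
  refine exists_mul_sub_mem_of_kaehlerDifferential_mem (B := pderivKer σ R) p
    (fun g => ⟨⟨g ^ p, pow_mem_pderivKer p g⟩, rfl⟩) P ?_
  rw [gradient]
  exact Submodule.sum_mem _ fun i _ => Submodule.smul_mem_smul (hf i) trivial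

theorem sq_dvd_of_dvd_of_dvd_pderiv {σ R : Type*} [CommRing R] [NoZeroDivisors R]
    {q g : MvPolynomial σ R} (hq : Prime q) (hqK : q ∉ pderivKer σ R) (hg : q ∣ g)
    (hgrad : ∀ i, q ∣ pderiv i g) : q ^ 2 ∣ g := by
  obtain ⟨s, rfl⟩ := hg
  obtain ⟨j, hj⟩ := exists_pderiv_ne_zero hqK
  have hqj : ¬q ∣ pderiv j q := fun h => (totalDegree_lt_of_dvd_pderiv h hj).false
  have hqs : q ∣ pderiv j q * s := by
    have h := hgrad j
    rwa [pderiv_mul, dvd_add_left (dvd_mul_right _ _)] at h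
  rw [sq]
  exact mul_dvd_mul_left q ((hq.dvd_or_dvd hqs).resolve_left hqj)

theorem exists_dvd_mul_sub_pow {σ R : Type*} [Finite σ] [CommRing R] [NoZeroDivisors R] (p : ℕ)
    [hp : Fact p.Prime] [CharP R p] {q f : MvPolynomial σ R} (hq : Prime q)
    (hqf : ∀ i, q ∣ pderiv i f) :
    ∃ w u π : pderivKer σ R, ∃ k < p,
      ¬q ∣ w ∧ q ∣ π ∧ π ≠ 0 ∧ (π : MvPolynomial σ R) ∣ (w * f - u) ^ k := by
  have hprime : (Ideal.span {q}).IsPrime := (Ideal.span_singleton_prime hq.ne_zero).2 hq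
  obtain ⟨w, u, hqw, hwu⟩ := exists_mul_sub_mem_of_pderiv_mem p (Ideal.span {q})
    fun i => Ideal.mem_span_singleton.2 (hqf i)
  rw [Ideal.mem_span_singleton] at hqw hwu
  by_cases hqK : q ∈ pderivKer σ R
  · exact ⟨w, u, ⟨q, hqK⟩, 1, hp.out.one_lt, hqw, dvd_rfl,
      fun h => hq.ne_zero (congrArg Subtype.val h), by simpa using hwu⟩
  have hgrad (i : σ) : q ∣ pderiv i (w * f - u) := by
    rw [map_sub, pderiv_mul, w.2 i, u.2 i, zero_mul, zero_add, sub_zero]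
    exact (hqf i).mul_left _
  have hsq := sq_dvd_of_dvd_of_dvd_pderiv hq hqK hwu hgrad
  -- `q ^ 2 ∣ w f - u` gives `q ^ p ∣ (w f - u) ^ k` as soon as `p ≤ 2k`.
  refine ⟨w, u, ⟨q ^ p, pow_mem_pderivKer p q⟩, (p + 1) / 2, ?_, hqw,
    dvd_pow_self q hp.out.ne_zero, fun h => pow_ne_zero p hq.ne_zero (congrArg Subtype.val h), ?_⟩
  · have := hp.out.two_le
    omega
  · calc q ^ p ∣ (q ^ 2) ^ ((p + 1) / 2) := by rw [← pow_mul]; exact pow_dvd_pow q (by omega)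
      _ ∣ (w * f - u) ^ ((p + 1) / 2) := pow_dvd_pow_of_dvd hsq _

end Residue

/-- The divergence `∑ᵢ ∂(d Xᵢ)/∂Xᵢ` of a derivation `d` of `R[Xᵢ : i]`; the paper's `d*`. -/
noncomputable def divergence {σ R : Type*} [Fintype σ] [CommRing R]
    (d : Derivation R (MvPolynomial σ R) (MvPolynomial σ R)) : MvPolynomial σ R :=
  ∑ i, pderiv i (d (X i))

/-- The Jacobian derivation `g ↦ ∂₀f ∂₁g - ∂₁f ∂₀g` of `R[X₀, X₁]`; the paper's `d_f`. -/
noncomputable def jacobianDer {R : Type*} [CommRing R] (f : MvPolynomial (Fin 2) R) :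
    Derivation R (MvPolynomial (Fin 2) R) (MvPolynomial (Fin 2) R) :=
  pderiv 0 f • pderiv 1 - pderiv 1 f • pderiv 0

theorem divergence_smul {σ R : Type*} [Fintype σ] [CommRing R] (h : MvPolynomial σ R)
    (d : Derivation R (MvPolynomial σ R) (MvPolynomial σ R)) :
    divergence (h • d) = d h + h * divergence d := by
  simp only [divergence, Derivation.smul_apply, smul_eq_mul, pderiv_mul, derivation_eq_sum d h,
    Finset.mul_sum, Finset.sum_add_distrib]

theorem exists_eq_mul_of_isRelPrime {A : Type*} [CommRing A] [IsDomain A] [DecompositionMonoid A]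
    {a b u v : A} (hab : IsRelPrime a b) (h : u * a + v * b = 0) :
    ∃ r, u = r * b ∧ v = -(r * a) := by
  by_cases hb : b = 0
  · subst hb
    obtain ⟨a, rfl⟩ := isRelPrime_zero_right.1 hab
    exact ⟨-(v * ↑a⁻¹), by simpa using h, by simp⟩
  · obtain ⟨r, rfl⟩ : b ∣ u :=
      hab.symm.dvd_of_dvd_mul_right (z := a) ⟨-v, by linear_combination h⟩
    exact ⟨r, mul_comm _ _, mul_right_cancel₀ hb (by linear_combination h)⟩

section Jacobian

variable {R : Type*} [CommRing R]

theorem jacobianDer_apply (f g : MvPolynomial (Fin 2) R) :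
    jacobianDer f g = pderiv 0 f * pderiv 1 g - pderiv 1 f * pderiv 0 g :=
  rfl

theorem jacobianDer_self (f : MvPolynomial (Fin 2) R) : jacobianDer f f = 0 := by
  rw [jacobianDer_apply, mul_comm, sub_self]

theorem jacobianDer_X_zero (f : MvPolynomial (Fin 2) R) : jacobianDer f (X 0) = -pderiv 1 f := by
  simp [jacobianDer_apply]

theorem jacobianDer_X_one (f : MvPolynomial (Fin 2) R) : jacobianDer f (X 1) = pderiv 0 f := by
  simp [jacobianDer_apply]

theorem divergence_jacobianDer (f : MvPolynomial (Fin 2) R) : divergence (jacobianDer f) = 0 := by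
  rw [divergence, Fin.sum_univ_two, jacobianDer_X_zero, jacobianDer_X_one, map_neg,
    pderiv_pderiv_comm, neg_add_cancel]

variable {d : Derivation R (MvPolynomial (Fin 2) R) (MvPolynomial (Fin 2) R)}
  {f g h : MvPolynomial (Fin 2) R}

theorem jacobianDer_eq_smul_iff :
    jacobianDer f = h • d ↔ pderiv 0 f = h * d (X 1) ∧ pderiv 1 f = -(h * d (X 0)) := by
  have ext_X : jacobianDer f = h • d ↔ ∀ i, jacobianDer f (X i) = (h • d) (X i) :=
    ⟨fun H i => by rw [H], derivation_ext⟩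
  rw [ext_X, Fin.forall_fin_two, jacobianDer_X_zero, jacobianDer_X_one, neg_eq_iff_eq_neg, and_comm]
  rfl

theorem jacobianDer_eq_smul_jacobianDer_iff :
    jacobianDer g = h • jacobianDer f ↔ ∀ i, pderiv i g = h * pderiv i f := by
  rw [jacobianDer_eq_smul_iff, jacobianDer_X_zero, jacobianDer_X_one, mul_neg, neg_neg,
    Fin.forall_fin_two]

theorem dvd_pderiv_of_jacobianDer_eq_smul (hh : jacobianDer f = h • d) (i : Fin 2) :
    h ∣ pderiv i f := by
  obtain ⟨h0, h1⟩ := jacobianDer_eq_smul_iff.1 hh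
  fin_cases i
  · exact ⟨_, h0⟩
  · exact ⟨-d (X 0), by simpa using h1⟩

theorem ne_zero_of_jacobianDer_eq_smul (hf : f ∉ pderivKer (Fin 2) R)
    (hh : jacobianDer f = h • d) : h ≠ 0 := by
  rintro rfl
  exact hf fun i => zero_dvd_iff.1 (dvd_pderiv_of_jacobianDer_eq_smul hh i)

theorem derivation_eq_zero_of_jacobianDer_eq_smul [NoZeroDivisors R]
    (hf : f ∉ pderivKer (Fin 2) R) (hh : jacobianDer f = h • d) : d f = 0 := by
  have hself := jacobianDer_self f
  rw [hh, Derivation.smul_apply, smul_eq_mul] at hself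
  exact (mul_eq_zero.1 hself).resolve_left (ne_zero_of_jacobianDer_eq_smul hf hh)

theorem derivation_eq_zero_of_divergence_eq_zero (hd : divergence d = 0)
    (hh : jacobianDer f = h • d) : d h = 0 := by
  have hdiv := divergence_smul h d
  rwa [← hh, divergence_jacobianDer, hd, mul_zero, add_zero, eq_comm] at hdiv

theorem isRelPrime_pderiv_iff_isUnit (hd : IsRelPrime (d (X 0)) (d (X 1)))
    (hh : jacobianDer f = h • d) : IsRelPrime (pderiv 0 f) (pderiv 1 f) ↔ IsUnit h := by
  refine ⟨fun hf => hf (dvd_pderiv_of_jacobianDer_eq_smul hh 0)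
    (dvd_pderiv_of_jacobianDer_eq_smul hh 1), fun hu => ?_⟩
  obtain ⟨h0, h1⟩ := jacobianDer_eq_smul_iff.1 hh
  rwa [h0, h1, IsRelPrime.neg_right_iff, isRelPrime_mul_unit_left hu, isRelPrime_comm]

theorem exists_jacobianDer_eq_smul [IsDomain R] [DecompositionMonoid (MvPolynomial (Fin 2) R)]
    (hd : IsRelPrime (d (X 0)) (d (X 1))) (hf : d f = 0) :
    ∃ h : MvPolynomial (Fin 2) R, jacobianDer f = h • d := by
  simp only [jacobianDer_eq_smul_iff]
  refine exists_eq_mul_of_isRelPrime hd ?_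
  rw [← hf, derivation_eq_sum d f, Fin.sum_univ_two, smul_eq_mul, smul_eq_mul]

theorem exists_eq_C_smul_jacobianDer_iff [IsDomain R]
    [DecompositionMonoid (MvPolynomial (Fin 2) R)] (hd : IsRelPrime (d (X 0)) (d (X 1))) :
    (∃ c : R, IsUnit c ∧ d = (C c : MvPolynomial (Fin 2) R) • jacobianDer f) ↔
      d f = 0 ∧ IsRelPrime (pderiv 0 f) (pderiv 1 f) := by
  constructor
  · rintro ⟨c, hc, hdc⟩
    obtain ⟨u, hu⟩ := hc.map (C (σ := Fin 2))
    have hh : jacobianDer f = (↑u⁻¹ : MvPolynomial (Fin 2) R) • d := by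
      rw [hdc, ← hu, smul_smul, Units.inv_mul, one_smul]
    refine ⟨?_, (isRelPrime_pderiv_iff_isUnit hd hh).2 (Units.isUnit _)⟩
    rw [hdc, Derivation.smul_apply, jacobianDer_self, smul_zero]
  · rintro ⟨hf, hrel⟩
    obtain ⟨h, hh⟩ := exists_jacobianDer_eq_smul hd hf
    obtain ⟨_, ⟨c, rfl⟩, rfl⟩ :=
      isUnit_iff_eq_C_of_isReduced.1 ((isRelPrime_pderiv_iff_isUnit hd hh).1 hrel)
    exact ⟨_, c⁻¹.isUnit, by rw [hh, smul_smul, ← C_mul, Units.inv_mul, C_1, one_smul]⟩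

theorem exists_jacobianDer_eq_smul_jacobianDer [IsDomain R]
    [DecompositionMonoid (MvPolynomial (Fin 2) R)]
    (hf : IsRelPrime (pderiv 0 f) (pderiv 1 f)) (hg : jacobianDer f g = 0) :
    ∃ r : MvPolynomial (Fin 2) R, jacobianDer g = r • jacobianDer f := by
  refine exists_jacobianDer_eq_smul ?_ hg
  rwa [jacobianDer_X_zero, jacobianDer_X_one, IsRelPrime.neg_left_iff, isRelPrime_comm]

end Jacobian

section Kernel

theorem mem_adjoin_of_pderiv_eq_aeval_mul {σ R : Type*} [Finite σ] [CommRing R] [NoZeroDivisors R]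
    (p : ℕ) [Fact p.Prime] [CharP R p] {f g : MvPolynomial σ R}
    {P : Polynomial (pderivKer σ R)} (hdeg : P.natDegree < p)
    (hg : ∀ i, pderiv i g = Polynomial.aeval f P * pderiv i f) :
    g ∈ Algebra.adjoin (pderivKer σ R) {f} := by
  by_cases hf : f ∈ pderivKer σ R
  · exact Subalgebra.algebraMap_mem _ (⟨g, fun i => by rw [hg, hf i, mul_zero]⟩ : pderivKer σ R)
  obtain ⟨j, hj⟩ := exists_pderiv_ne_zero hf
  obtain ⟨Q, hQ⟩ := exists_derivative_eq_erase hdeg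
  have remainder (i : σ) : pderiv i (g - Polynomial.aeval f Q)
      = (P.coeff (p - 1) : MvPolynomial σ R) * f ^ (p - 1) * pderiv i f := by
    have chain := (pderivKerLinear (pderiv i)).map_aeval Q f
    have split := congrArg (Polynomial.aeval f) (P.monomial_add_erase (p - 1))
    rw [map_add, Polynomial.aeval_monomial, ← hQ] at split
    rw [pderivKerLinear_apply, pderivKerLinear_apply, smul_eq_mul] at chain
    rw [map_sub, hg, chain, ← split, ← sub_mul, add_sub_cancel_right]
    rfl
  have top_eq_zero := eq_zero_of_pderiv_eq_mul_pow_mul_pderiv p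
    ((P.coeff (p - 1)).2 j) hj (remainder j)
  have hconst : g - Polynomial.aeval f Q ∈ pderivKer σ R := fun i => by
    rw [remainder, top_eq_zero, zero_mul, zero_mul]
  rw [← sub_add_cancel g (Polynomial.aeval f Q)]
  exact add_mem (Subalgebra.algebraMap_mem _ (⟨_, hconst⟩ : pderivKer σ R))
    (Polynomial.aeval_mem_adjoin_singleton _ _)

variable {R : Type*} [CommRing R] [IsDomain R] {f g : MvPolynomial (Fin 2) R}

theorem mem_adjoin_of_jacobianDer_eq_zero [DecompositionMonoid (MvPolynomial (Fin 2) R)]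
    (p : ℕ) [hp : Fact p.Prime] [CharP R p]
    (hf : IsRelPrime (pderiv 0 f) (pderiv 1 f)) (hg : jacobianDer f g = 0) :
    g ∈ Algebra.adjoin (pderivKer (Fin 2) R) {f} := by
  induction hn : g.totalDegree using Nat.strong_induction_on generalizing g with
  | _ n ih =>
    by_cases hgK : g ∈ pderivKer (Fin 2) R
    · exact Subalgebra.algebraMap_mem _ (⟨g, hgK⟩ : pderivKer (Fin 2) R)
    obtain ⟨r, hr⟩ := exists_jacobianDer_eq_smul_jacobianDer hf hg
    obtain ⟨i, hi⟩ := exists_pderiv_ne_zero hgK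
    have hdeg : r.totalDegree < n :=
      hn ▸ totalDegree_lt_of_dvd_pderiv (dvd_pderiv_of_jacobianDer_eq_smul hr i) hi
    have hrf : jacobianDer f r = 0 :=
      derivation_eq_zero_of_divergence_eq_zero (divergence_jacobianDer f) hr
    obtain ⟨P, hPdeg, rfl⟩ := exists_natDegree_lt_aeval_eq hp.out.ne_zero
      (b := (⟨f ^ p, pow_mem_pderivKer p f⟩ : pderivKer (Fin 2) R)) rfl (ih _ hdeg hrf rfl)
    exact mem_adjoin_of_pderiv_eq_aeval_mul p hPdeg (jacobianDer_eq_smul_jacobianDer_iff.1 hr)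

variable {d : Derivation R (MvPolynomial (Fin 2) R) (MvPolynomial (Fin 2) R)}
  {h : MvPolynomial (Fin 2) R}

theorem isUnit_of_ker_le_adjoin [UniqueFactorizationMonoid R] (p : ℕ) [hp : Fact p.Prime]
    [CharP R p] (hf : f ∉ pderivKer (Fin 2) R) (hh : jacobianDer f = h • d)
    (hker : ∀ g, d g = 0 → g ∈ Algebra.adjoin (pderivKer (Fin 2) R) {f}) : IsUnit h := by
  by_contra hu
  obtain ⟨q, hq, hqh⟩ :=
    WfDvdMonoid.exists_irreducible_factor hu (ne_zero_of_jacobianDer_eq_smul hf hh)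
  obtain ⟨w, u, π, k, hk, hqw, hqπ, hπ, g, hg⟩ := exists_dvd_mul_sub_pow p hq.prime
    fun i => hqh.trans (dvd_pderiv_of_jacobianDer_eq_smul hh i)
  have hdg : d g = 0 := by
    have hder := congrArg (pderivKerLinear d) hg
    have hπ' : (π : MvPolynomial (Fin 2) R) ≠ 0 := fun h0 => hπ (Subtype.ext h0)
    have hconst (b : pderivKer (Fin 2) R) : d b = 0 := derivation_eq_zero_of_mem_pderivKer d b.2
    have hdf : d f = 0 := derivation_eq_zero_of_jacobianDer_eq_smul hf hh
    simpa [Derivation.leibniz_pow, hconst, hdf, hπ'] using hder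
  obtain ⟨P, hPdeg, rfl⟩ := exists_natDegree_lt_aeval_eq hp.out.ne_zero
    (b := (⟨f ^ p, pow_mem_pderivKer p f⟩ : pderivKer (Fin 2) R)) rfl (hker g hdg)
  obtain ⟨j, hj⟩ := exists_pderiv_ne_zero hf
  have hdvd : π ∣ w ^ k :=
    dvd_pow_of_mul_aeval_eq p (pderivKerLinear (pderiv j)) hj hk hPdeg hg.symm
  refine hqw (hq.prime.dvd_of_dvd_pow (n := k) (hqπ.trans ?_))
  exact map_dvd (pderivKer (Fin 2) R).val hdvd

theorem ker_eq_adjoin_iff [UniqueFactorizationMonoid R] (p : ℕ) [Fact p.Prime] [CharP R p]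
    (hf : f ∉ pderivKer (Fin 2) R) (hd : IsRelPrime (d (X 0)) (d (X 1))) :
    (∀ g, d g = 0 ↔ g ∈ Algebra.adjoin (pderivKer (Fin 2) R) {f}) ↔
      d f = 0 ∧ IsRelPrime (pderiv 0 f) (pderiv 1 f) := by
  constructor
  · intro hker
    have hdf : d f = 0 := (hker f).2 (Algebra.self_mem_adjoin_singleton _ f)
    obtain ⟨h, hh⟩ := exists_jacobianDer_eq_smul hd hdf
    exact ⟨hdf, (isRelPrime_pderiv_iff_isUnit hd hh).2
      (isUnit_of_ker_le_adjoin p hf hh fun g => (hker g).1)⟩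
  · rintro ⟨hdf, hrel⟩ g
    refine ⟨fun hdg => mem_adjoin_of_jacobianDer_eq_zero p hrel ?_, fun hg => ?_⟩
    · obtain ⟨h, hh⟩ := exists_jacobianDer_eq_smul hd hdf
      rw [hh, Derivation.smul_apply, hdg, smul_zero]
    · exact Derivation.eqOn_adjoin (D1 := pderivKerLinear d) (D2 := 0)
        (by simpa [Set.EqOn] using hdf) hg

end Kernel

section Minimality

variable {R : Type*} [CommRing R] [IsDomain R]
  {d : Derivation R (MvPolynomial (Fin 2) R) (MvPolynomial (Fin 2) R)}
  {f g h : MvPolynomial (Fin 2) R}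

theorem totalDegree_sub_pPart_le_of_jacobianDer_eq_smul (p : ℕ) [CharP R p]
    (hf : f ∉ pderivKer (Fin 2) R) (hg : g ∉ pderivKer (Fin 2) R)
    (hr : jacobianDer g = h • jacobianDer f) : (f - pPart p f).totalDegree ≤ g.totalDegree := by
  obtain ⟨i, hi, hdeg⟩ := exists_totalDegree_sub_pPart_le p hf
  have hgi : pderiv i g = h * pderiv i f := jacobianDer_eq_smul_jacobianDer_iff.1 hr i
  have hne : pderiv i g ≠ 0 :=
    hgi ▸ mul_ne_zero (ne_zero_of_jacobianDer_eq_smul hg hr) hi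
  exact hdeg.trans (totalDegree_lt_of_dvd_pderiv (Dvd.intro_left _ hgi.symm) hne)

theorem isUnit_of_C_dvd_sub_pPart (p : ℕ) [CharP R p] (hf : IsRelPrime (pderiv 0 f) (pderiv 1 f))
    {k : R} (hk : C k ∣ f - pPart p f) : IsUnit k := by
  have dvd_pderiv (i : Fin 2) : C k ∣ pderiv i f := by
    obtain ⟨g, hg⟩ := hk
    rw [← derivation_sub_pPart p, hg, pderiv_C_mul]
    exact dvd_mul_right _ _
  obtain ⟨c, hc, hkc⟩ := isUnit_iff_eq_C_of_isReduced.1 (hf (dvd_pderiv 0) (dvd_pderiv 1))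
  rwa [C_injective _ _ hkc]

theorem isUnit_of_totalDegree_minimal (p : ℕ) [Fact p.Prime] [CharP R p]
    (hf : f ∉ pderivKer (Fin 2) R) (hh : jacobianDer f = h • d) (hdiv : divergence d = 0)
    (hmin : ∀ g ∉ pderivKer (Fin 2) R, d g = 0 → (f - pPart p f).totalDegree ≤ g.totalDegree)
    (hprim : ∀ k : R, k ≠ 0 → C k ∣ f - pPart p f → IsUnit k) : IsUnit h := by
  have hne : h ≠ 0 := ne_zero_of_jacobianDer_eq_smul hf hh
  have hhK : h ∈ pderivKer (Fin 2) R := by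
    obtain ⟨i, hi⟩ := exists_pderiv_ne_zero hf
    by_contra hhK
    refine (hmin h hhK (derivation_eq_zero_of_divergence_eq_zero hdiv hh)).not_gt
      (totalDegree_lt_of_dvd_pderiv (i := i) ?_ ?_) <;> rw [derivation_sub_pPart]
    exacts [dvd_pderiv_of_jacobianDer_eq_smul hh i, hi]
  obtain ⟨g, hg⟩ := dvd_sub_pPart p hhK (dvd_pderiv_of_jacobianDer_eq_smul hh)
  have hgK : g ∉ pderivKer (Fin 2) R := fun hgK =>
    hf ((sub_pPart_mem_pderivKer_iff p).1 (hg ▸ mul_mem hhK hgK))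
  have hdg : d g = 0 := by
    have hder := congrArg d hg
    rw [derivation_sub_pPart, derivation_eq_zero_of_jacobianDer_eq_smul hf hh, d.leibniz,
      derivation_eq_zero_of_mem_pderivKer d hhK, smul_zero, add_zero, smul_eq_mul] at hder
    exact (mul_eq_zero.1 hder.symm).resolve_left hne
  have hdeg : h.totalDegree = 0 := by
    have hle := hmin g hgK hdg
    rw [hg, totalDegree_mul_of_isDomain hne (ne_of_mem_of_not_mem (zero_mem _) hgK).symm] at hle
    omega
  rw [totalDegree_eq_zero_iff_eq_C.1 hdeg] at hne hg ⊢
  exact (hprim _ (fun h0 => hne (by rw [h0, C_0])) ⟨g, hg⟩).map C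

theorem forall_totalDegree_le_sub_pPart_iff (p : ℕ) [CharP R p] {n : ℕ} :
    (∀ h, h - pPart p h ≠ 0 → d (h - pPart p h) = 0 → n ≤ (h - pPart p h).totalDegree) ↔
      ∀ g ∉ pderivKer (Fin 2) R, d g = 0 → n ≤ g.totalDegree := by
  simp only [sub_pPart_ne_zero_iff, derivation_sub_pPart]
  refine ⟨fun H g hg hdg => (H g hg hdg).trans (totalDegree_sub_pPart_le p g),
    fun H h hh hdh => H _ (mt (sub_pPart_mem_pderivKer_iff p).1 hh) (by rwa [derivation_sub_pPart])⟩

theorem divergence_eq_zero_and_minimal_iff [DecompositionMonoid (MvPolynomial (Fin 2) R)] (p : ℕ)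
    [Fact p.Prime] [CharP R p] (hf : f ∉ pderivKer (Fin 2) R)
    (hd : IsRelPrime (d (X 0)) (d (X 1))) :
    (divergence d = 0 ∧ f - pPart p f ≠ 0 ∧ d (f - pPart p f) = 0 ∧
      (∀ h, h - pPart p h ≠ 0 → d (h - pPart p h) = 0 →
        (f - pPart p f).totalDegree ≤ (h - pPart p h).totalDegree) ∧
      ∀ k : R, k ≠ 0 → C k ∣ f - pPart p f → IsUnit k) ↔
        d f = 0 ∧ IsRelPrime (pderiv 0 f) (pderiv 1 f) := by
  rw [forall_totalDegree_le_sub_pPart_iff, derivation_sub_pPart, sub_pPart_ne_zero_iff]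
  constructor
  · rintro ⟨hdiv, -, hdf, hmin, hprim⟩
    obtain ⟨h, hh⟩ := exists_jacobianDer_eq_smul hd hdf
    exact ⟨hdf, (isRelPrime_pderiv_iff_isUnit hd hh).2
      (isUnit_of_totalDegree_minimal p hf hh hdiv hmin hprim)⟩
  · rintro ⟨hdf, hrel⟩
    refine ⟨?_, hf, hdf, fun g hg hdg => ?_, fun k _ => isUnit_of_C_dvd_sub_pPart p hrel⟩
    · obtain ⟨c, -, rfl⟩ := (exists_eq_C_smul_jacobianDer_iff hd).2 ⟨hdf, hrel⟩
      rw [divergence_smul, divergence_jacobianDer, mul_zero, add_zero, derivation_C]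
    · obtain ⟨h, hh⟩ := exists_jacobianDer_eq_smul hd hdf
      obtain ⟨r, hr⟩ := exists_jacobianDer_eq_smul_jacobianDer hrel (g := g)
        (by rw [hh, Derivation.smul_apply, hdg, smul_zero])
      exact totalDegree_sub_pPart_le_of_jacobianDer_eq_smul p hf hg hr

end Minimality

/-- Proposition 1.  `K` a UFD of characteristic `p > 0`, `d` a nonzero
`K`-derivation of `K[x,y]` with `d(x), d(y)` coprime, `f ∈ K[x,y] \ K[x^p,y^p]`.
TFAE:
(1) `K[x,y]^d = K[x^p,y^p,f]`;
(2) `d = c·d_f` for some invertible `c ∈ K`;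
(3) `d(f) = 0` and `gcd(∂f/∂x, ∂f/∂y)` is a unit;
(4) `d* = 0`, `f − f_{(p)}` is a nonzero constant of `d` of minimal total degree
    among nonzero constants of the form `h − h_{(p)}`, and `f − f_{(p)}` is not
    divisible by any noninvertible nonzero element of `K`. -/
theorem proposition1_one_element_p_basis
    {K : Type*} [CommRing K] [IsDomain K] [UniqueFactorizationMonoid K]
    (p : ℕ) [Fact p.Prime] [CharP K p]
    (d : Derivation K (MvPolynomial (Fin 2) K) (MvPolynomial (Fin 2) K))
    (hd : d ≠ 0)
    (hcop : ∀ q : MvPolynomial (Fin 2) K, q ∣ d (X 0) → q ∣ d (X 1) → IsUnit q)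
    (f : MvPolynomial (Fin 2) K)
    (hf : f ∉ Algebra.adjoin K ({X 0 ^ p, X 1 ^ p} : Set (MvPolynomial (Fin 2) K))) :
    [({q : MvPolynomial (Fin 2) K | d q = 0} =
        ↑(Algebra.adjoin K ({X 0 ^ p, X 1 ^ p, f} : Set (MvPolynomial (Fin 2) K)))),
      (∃ c : K, IsUnit c ∧ ∀ g,
        d g = C c * (pderiv (0 : Fin 2) f * pderiv (1 : Fin 2) g
                   - pderiv (1 : Fin 2) f * pderiv (0 : Fin 2) g)),
      (d f = 0 ∧ ∀ q : MvPolynomial (Fin 2) K,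
        q ∣ pderiv (0 : Fin 2) f → q ∣ pderiv (1 : Fin 2) f → IsUnit q),
      (pderiv (0 : Fin 2) (d (X 0)) + pderiv (1 : Fin 2) (d (X 1)) = 0 ∧
        f - pPart p f ≠ 0 ∧
        d (f - pPart p f) = 0 ∧
        (∀ h : MvPolynomial (Fin 2) K, h - pPart p h ≠ 0 → d (h - pPart p h) = 0 →
          (f - pPart p f).totalDegree ≤ (h - pPart p h).totalDegree) ∧
        (∀ k : K, k ≠ 0 → C k ∣ (f - pPart p f) → IsUnit k))].TFAE := by
  have hadj (g : MvPolynomial (Fin 2) K) : g ∈ Algebra.adjoin (pderivKer (Fin 2) K) {f} ↔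
      g ∈ Algebra.adjoin K ({X 0 ^ p, X 1 ^ p, f} : Set (MvPolynomial (Fin 2) K)) := by
    rw [mem_adjoin_pderivKer_singleton_iff p, range_X_pow_fin_two, Set.insert_union,
      Set.singleton_union]
  have hf' : f ∉ pderivKer (Fin 2) K := by
    rwa [pderivKer_eq_adjoin p, range_X_pow_fin_two]
  tfae_have 1 ↔ 3 := by
    simpa only [Set.ext_iff, Set.mem_ofPred_eq, SetLike.mem_coe, hadj, IsRelPrime]
      using ker_eq_adjoin_iff p hf' @hcop
  tfae_have 2 ↔ 3 := by
    simpa only [Derivation.ext_iff, Derivation.smul_apply, jacobianDer_apply, smul_eq_mul,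
      IsRelPrime] using exists_eq_C_smul_jacobianDer_iff @hcop
  tfae_have 4 ↔ 3 := by
    simpa only [divergence, Fin.sum_univ_two, IsRelPrime]
      using divergence_eq_zero_and_minimal_iff p hf' @hcop
  tfae_finish
end

section
/- Let K be a UFD of characteristic p > 0, let f ∈ K[x,y] \ K[x^p,y^p], and let d = c·d_f for some invertible element c ∈ K, with d(x) and d(y) coprime. Then f − f_{(p)} is nonzero, belongs to K[x,y]^d, has minimal total degree among all nonzero polynomials of the form h − h_{(p)} (h ∈ K[x,y]) belonging to K[x,y]^d, and f − f_{(p)} is not divisible by any non-invertible element of K \ {0}. -/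
/-!
Write `F = f - f_(p)`. As `f_(p)` has zero partial derivatives, `d_f = d_F`, so `d F = 0`; and a
constant dividing `F` divides both partial derivatives of `F`, which are coprime. Minimality rests
on the fact that in `F`, and in every `H = h - h_(p)`, each monomial has an exponent that is nonzero
in `K`, so that some partial derivative lowers the total degree by exactly one. If `d H = 0`, that
is `F_x H_y = F_y H_x`, coprimality gives `a ≠ 0` with `H_x = a F_x` and `H_y = a F_y`; choosing
the variable `i` for `F`, we get `deg F = deg F_i + 1 ≤ deg H_i + 1 ≤ deg H`.
-/

open MvPolynomial

section PartialDerivatives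

variable {σ R : Type*} [CommSemiring R]

theorem exists_mem_support_totalDegree_eq {g : MvPolynomial σ R} (hg : g ≠ 0) :
    ∃ m ∈ g.support, g.totalDegree = m.degree :=
  Finset.exists_mem_eq_sup _ (support_nonempty.2 hg) _

theorem totalDegree_pderiv_add_one_le {g : MvPolynomial σ R} {i : σ} (hi : pderiv i g ≠ 0) :
    (pderiv i g).totalDegree + 1 ≤ g.totalDegree := by
  obtain ⟨m, hm, hdeg⟩ := exists_mem_support_totalDegree_eq hi
  rw [mem_support_iff, coeff_pderiv] at hm
  calc (pderiv i g).totalDegree + 1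
      = (m + Finsupp.single i 1).degree := by rw [hdeg, map_add, Finsupp.degree_single]
    _ ≤ g.totalDegree := le_totalDegree (mem_support_iff.2 (left_ne_zero_of_mul hm))

theorem mem_support_pderiv [NoZeroDivisors R] {g : MvPolynomial σ R} {m : σ →₀ ℕ} {i : σ} :
    m ∈ (pderiv i g).support ↔ m + Finsupp.single i 1 ∈ g.support ∧ ((m i + 1 : ℕ) : R) ≠ 0 := by
  rw [mem_support_iff, mem_support_iff, coeff_pderiv, mul_ne_zero_iff, Nat.cast_succ]

theorem exists_totalDegree_pderiv_add_one_eq [NoZeroDivisors R] {g : MvPolynomial σ R}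
    (hg : g ≠ 0) (hexp : ∀ m ∈ g.support, ∃ i, (m i : R) ≠ 0) :
    ∃ i, pderiv i g ≠ 0 ∧ (pderiv i g).totalDegree + 1 = g.totalDegree := by
  obtain ⟨m, hm, hdeg⟩ := exists_mem_support_totalDegree_eq hg
  obtain ⟨i, hi⟩ := hexp m hm
  obtain ⟨n, rfl⟩ : ∃ n, m = n + Finsupp.single i 1 :=
    ⟨_, (Finsupp.sub_add_single_one_cancel fun h => hi (by rw [h, Nat.cast_zero])).symm⟩
  have hn : n ∈ (pderiv i g).support := mem_support_pderiv.2 ⟨hm, by simpa using hi⟩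
  have hne : pderiv i g ≠ 0 := support_nonempty.1 ⟨n, hn⟩
  refine ⟨i, hne, (totalDegree_pderiv_add_one_le hne).antisymm ?_⟩
  rw [hdeg, map_add, Finsupp.degree_single]
  exact Nat.add_le_add_right (le_totalDegree hn) 1

theorem totalDegree_le_of_pderiv_eq_mul [NoZeroDivisors R] {a g h : MvPolynomial σ R} (ha : a ≠ 0)
    (hexp : ∀ m ∈ g.support, ∃ i, (m i : R) ≠ 0) (hgh : ∀ i, pderiv i h = a * pderiv i g) :
    g.totalDegree ≤ h.totalDegree := by
  obtain rfl | hg := eq_or_ne g 0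
  · simp
  obtain ⟨i, hi, hdeg⟩ := exists_totalDegree_pderiv_add_one_eq hg hexp
  have hhi : pderiv i h ≠ 0 := hgh i ▸ mul_ne_zero ha hi
  calc g.totalDegree = (pderiv i g).totalDegree + 1 := hdeg.symm
    _ ≤ (pderiv i h).totalDegree + 1 := by
      rw [hgh, totalDegree_mul_of_isDomain ha hi]
      lia
    _ ≤ h.totalDegree := totalDegree_pderiv_add_one_le hhi

theorem C_dvd_pderiv {k : R} {g : MvPolynomial σ R} (hk : C k ∣ g) (i : σ) :
    C k ∣ pderiv i g := by
  obtain ⟨q, rfl⟩ := hk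
  exact ⟨pderiv i q, pderiv_C_mul⟩

end PartialDerivatives

theorem exists_eq_mul_of_isRelPrime_of_mul_eq_mul {M : Type*} [CommMonoidWithZero M]
    [IsCancelMulZero M] [DecompositionMonoid M] {u v s t : M} (huv : IsRelPrime u v)
    (h : u * t = v * s) : ∃ a, s = a * u ∧ t = a * v := by
  obtain rfl | hu := eq_or_ne u 0
  · have hv : IsUnit v := isRelPrime_zero_left.1 huv
    obtain ⟨a, rfl⟩ := hv.dvd (a := t)
    have hs : s = 0 := hv.mul_right_eq_zero.1 (by rw [← h, zero_mul])
    exact ⟨a, by rw [hs, mul_zero], mul_comm v a⟩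
  · obtain ⟨a, rfl⟩ := huv.dvd_of_dvd_mul_left ⟨t, h.symm⟩
    exact ⟨a, mul_comm u a, mul_left_cancel₀ hu (by rw [h, mul_left_comm, mul_comm a])⟩

section JacobianDerivation

variable {R : Type*} [CommRing R]

/-- The Jacobian derivation `d_f` of `R[x,y]`, sending `g` to the Jacobian determinant of
`(f, g)`. -/
noncomputable def jacobianDerivation (f : MvPolynomial (Fin 2) R) :
    Derivation R (MvPolynomial (Fin 2) R) (MvPolynomial (Fin 2) R) :=
  pderiv 0 f • pderiv 1 - pderiv 1 f • pderiv 0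

theorem jacobianDerivation_apply (f g : MvPolynomial (Fin 2) R) :
    jacobianDerivation f g = pderiv 0 f * pderiv 1 g - pderiv 1 f * pderiv 0 g := rfl

theorem jacobianDerivation_self (f : MvPolynomial (Fin 2) R) : jacobianDerivation f f = 0 := by
  rw [jacobianDerivation_apply, mul_comm, sub_self]

theorem jacobianDerivation_X_zero (f : MvPolynomial (Fin 2) R) :
    jacobianDerivation f (X 0) = -pderiv 1 f := by
  simp [jacobianDerivation_apply]

theorem jacobianDerivation_X_one (f : MvPolynomial (Fin 2) R) :
    jacobianDerivation f (X 1) = pderiv 0 f := by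
  simp [jacobianDerivation_apply]

theorem isRelPrime_jacobianDerivation_X {f : MvPolynomial (Fin 2) R} :
    IsRelPrime (jacobianDerivation f (X 0)) (jacobianDerivation f (X 1)) ↔
      IsRelPrime (pderiv 0 f) (pderiv 1 f) := by
  rw [jacobianDerivation_X_zero, jacobianDerivation_X_one, IsRelPrime.neg_left_iff,
    isRelPrime_comm]

variable [NoZeroDivisors R] [DecompositionMonoid (MvPolynomial (Fin 2) R)]
  {f h : MvPolynomial (Fin 2) R}

theorem exists_pderiv_eq_mul_of_jacobianDerivation_eq_zero
    (hf : IsRelPrime (pderiv 0 f) (pderiv 1 f)) (hfh : jacobianDerivation f h = 0) :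
    ∃ a, ∀ i, pderiv i h = a * pderiv i f := by
  rw [jacobianDerivation_apply, sub_eq_zero] at hfh
  obtain ⟨a, h₀, h₁⟩ := exists_eq_mul_of_isRelPrime_of_mul_eq_mul hf hfh
  exact ⟨a, Fin.forall_fin_two.2 ⟨h₀, h₁⟩⟩

theorem totalDegree_le_of_jacobianDerivation_eq_zero (hf : IsRelPrime (pderiv 0 f) (pderiv 1 f))
    (hexp : ∀ m ∈ f.support, ∃ i, (m i : R) ≠ 0) (hh : ∃ i, pderiv i h ≠ 0)
    (hfh : jacobianDerivation f h = 0) : f.totalDegree ≤ h.totalDegree := by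
  obtain ⟨a, ha⟩ := exists_pderiv_eq_mul_of_jacobianDerivation_eq_zero hf hfh
  obtain ⟨j, hj⟩ := hh
  exact totalDegree_le_of_pderiv_eq_mul (left_ne_zero_of_mul (ha j ▸ hj)) hexp ha

end JacobianDerivation

section PPart

variable {K : Type*} [CommRing K] (p : ℕ)

variable [CharP K p]

theorem pderiv_pPart (f : MvPolynomial (Fin 2) K) (i : Fin 2) : pderiv i (pPart p f) = 0 := by
  rw [pPart, map_sum]
  refine Finset.sum_eq_zero fun m hm => ?_
  have hpm : p ∣ m i := (Finset.mem_filter.1 hm).2 i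
  rw [pderiv_monomial, (CharP.cast_eq_zero_iff K p (m i)).2 hpm, mul_zero, monomial_zero]

theorem jacobianDerivation_sub_pPart (f : MvPolynomial (Fin 2) K) :
    jacobianDerivation (f - pPart p f) = jacobianDerivation f := by
  simp only [jacobianDerivation, map_sub, pderiv_pPart, sub_zero]

theorem exists_cast_ne_zero_of_mem_support_sub_pPart {f : MvPolynomial (Fin 2) K}
    {m : Fin 2 →₀ ℕ} (hm : m ∈ (f - pPart p f).support) : ∃ i, (m i : K) ≠ 0 := by
  by_contra! h
  have hpm : ∀ i, p ∣ m i := fun i => (CharP.cast_eq_zero_iff K p (m i)).1 (h i)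
  rw [mem_support_iff, coeff_sub, coeff_pPart, if_pos hpm, sub_self] at hm
  exact hm rfl

theorem exists_pderiv_sub_pPart_ne_zero [NoZeroDivisors K] {h : MvPolynomial (Fin 2) K}
    (hh : h - pPart p h ≠ 0) : ∃ i, pderiv i (h - pPart p h) ≠ 0 :=
  let ⟨i, hi, _⟩ := exists_totalDegree_pderiv_add_one_eq hh
    fun _ => exists_cast_ne_zero_of_mem_support_sub_pPart p
  ⟨i, hi⟩

end PPart

theorem proposition1_2_implies_4_general {K : Type*} [CommRing K] [IsDomain K]
    [DecompositionMonoid (MvPolynomial (Fin 2) K)] (p : ℕ) [CharP K p]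
    (f : MvPolynomial (Fin 2) K) (c : K)
    (d : Derivation K (MvPolynomial (Fin 2) K) (MvPolynomial (Fin 2) K))
    (hd : d = c • jacobianDerivation f) (hcop : IsRelPrime (d (X 0)) (d (X 1))) :
    f - pPart p f ≠ 0 ∧
    d (f - pPart p f) = 0 ∧
    (∀ h : MvPolynomial (Fin 2) K, h - pPart p h ≠ 0 → d (h - pPart p h) = 0 →
      (f - pPart p f).totalDegree ≤ (h - pPart p h).totalDegree) ∧
    (∀ k : K, C k ∣ (f - pPart p f) → IsUnit k) := by
  rw [← jacobianDerivation_sub_pPart p f] at hd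
  set F := f - pPart p f
  have hd_apply (g) : d g = C c * jacobianDerivation F g := by
    rw [hd, Derivation.smul_apply, smul_eq_C_mul]
  rw [hd_apply, hd_apply] at hcop
  have hrel : IsRelPrime (pderiv 0 F) (pderiv 1 F) :=
    isRelPrime_jacobianDerivation_X.1 hcop.of_mul_left_right.of_mul_right_right
  have hc : C c ≠ 0 :=
    hcop.ne_zero_or_ne_zero.elim left_ne_zero_of_mul left_ne_zero_of_mul
  refine ⟨?_, ?_, fun h hh hdh => ?_, fun k hk => ?_⟩
  · exact hrel.ne_zero_or_ne_zero.elim ne_zero_of_map ne_zero_of_map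
  · rw [hd_apply, jacobianDerivation_self, mul_zero]
  · rw [hd_apply, mul_eq_zero_iff_left hc] at hdh
    exact totalDegree_le_of_jacobianDerivation_eq_zero hrel
      (fun _ => exists_cast_ne_zero_of_mem_support_sub_pPart p)
      (exists_pderiv_sub_pPart_ne_zero p hh) hdh
  · exact (hrel (C_dvd_pderiv hk 0) (C_dvd_pderiv hk 1)).of_map C

/-- (2) ⇒ (4) of Proposition 1.  If `f ∈ K[x,y] \ K[x^p,y^p]` and
`d = c·d_f` for an invertible `c ∈ K`, with `d(x), d(y)` coprime, then
`f − f_{(p)}` is a nonzero constant of `d`, of minimal total degree among nonzero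
constants of `d` of the form `h − h_{(p)}`, and `f − f_{(p)}` is not divisible by
any noninvertible nonzero element of `K`. -/
theorem proposition1_2_implies_4
    {K : Type*} [CommRing K] [IsDomain K] [UniqueFactorizationMonoid K]
    (p : ℕ) [Fact p.Prime] [CharP K p]
    (f : MvPolynomial (Fin 2) K)
    (hf : f ∉ Algebra.adjoin K ({X 0 ^ p, X 1 ^ p} : Set (MvPolynomial (Fin 2) K)))
    (c : K) (hc : IsUnit c)
    (d : Derivation K (MvPolynomial (Fin 2) K) (MvPolynomial (Fin 2) K))
    (hdf : ∀ g, d g = C c * (pderiv (0 : Fin 2) f * pderiv (1 : Fin 2) g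
                           - pderiv (1 : Fin 2) f * pderiv (0 : Fin 2) g))
    (hcop : ∀ q : MvPolynomial (Fin 2) K, q ∣ d (X 0) → q ∣ d (X 1) → IsUnit q) :
    f - pPart p f ≠ 0 ∧
    d (f - pPart p f) = 0 ∧
    (∀ h : MvPolynomial (Fin 2) K, h - pPart p h ≠ 0 → d (h - pPart p h) = 0 →
      (f - pPart p f).totalDegree ≤ (h - pPart p h).totalDegree) ∧
    (∀ k : K, k ≠ 0 → C k ∣ (f - pPart p f) → IsUnit k) := by
  have hd : d = c • jacobianDerivation f := Derivation.ext fun g => by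
    rw [hdf, Derivation.smul_apply, smul_eq_C_mul, jacobianDerivation_apply]
  obtain ⟨hne, hker, hmin, hprim⟩ := proposition1_2_implies_4_general p f c d hd hcop
  exact ⟨hne, hker, hmin, fun k _ => hprim k⟩
end
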